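/- Let V be a finite-dimensional vector space over the finite field 𝔽_q. For all subspaces S, T, U ⊆ V, 𝔑(S ∩ T) + 𝔑(T ∩ U) ≤ 𝔑(S ∩ U) + 𝔑(T). -/

import Mathlib

/-!
Common setup: `V` is a finite-dimensional vector space over a finite field `F`.
An *atom* is a one-dimensional subspace of `V`.  An *atomic decomposition* of a
subspace `S ⊆ V` is a finite set of atoms whose join (subspace sum) is `S`;
it is *minimal* if no proper subset is an atomic decomposition of `S`.
`NN S` is the number of minimal atomic decompositions of `S`.
-/

variable {F V : Type*} [Field F] [Fintype F] [AddCommGroup V] [Module F V]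
  [FiniteDimensional F V]

/-- `𝔞` is an atomic decomposition of `S`. -/
def IsAtomicDecomp (S : Submodule F V) (𝔞 : Finset (Submodule F V)) : Prop :=
  (∀ A ∈ 𝔞, Module.finrank F A = 1) ∧ 𝔞.sup id = S

/-- `𝔞` is a minimal atomic decomposition of `S`. -/
def IsMinAtomicDecomp (S : Submodule F V) (𝔞 : Finset (Submodule F V)) : Prop :=
  IsAtomicDecomp S 𝔞 ∧ ∀ 𝔟 ⊂ 𝔞, ¬ IsAtomicDecomp S 𝔟

/-- `NN S` is the number `𝔑(S)` of minimal atomic decompositions of `S`. -/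
noncomputable def NN (S : Submodule F V) : ℕ :=
  Set.ncard {𝔞 : Finset (Submodule F V) | IsMinAtomicDecomp S 𝔞}

/-!
Fix an atom `P ≤ T` lying in neither of two proper subspaces `A` and `B ≠ ⊥` of `T`, and enlarge
`A` and `B` to hyperplanes `H` and `H'` of `T` that still avoid `P`. Adjoining `P` to the minimal
decompositions of `H` gives minimal decompositions of `T` that contain `P`; adjoining to those of
`H'` an atom `Q ≠ P` of `T` with `Q ≰ H'` gives ones that do not contain `P`. Hence
`𝔑(A) + 𝔑(B) ≤ 𝔑(T)`, which is applied to `A = S ∩ T` and `B = T ∩ U`; when one of these is `T`,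
or `B = ⊥`, monotonicity of `𝔑` is enough.
-/

section Lattice

variable {α : Type*}

lemma sup_eq_of_covBy_of_not_le [SemilatticeSup α] {a b c : α} (hac : a ⋖ c) (hbc : b ≤ c)
    (hba : ¬ b ≤ a) : a ⊔ b = c :=
  (hac.eq_or_eq le_sup_left (sup_le hac.le hbc)).resolve_left (mt sup_eq_left.1 hba)

lemma exists_le_covBy_not_le [Lattice α] [BoundedOrder α] [IsModularLattice α]
    [ComplementedLattice α] {a p t : α} (hat : a ≤ t) (hpt : p ≤ t) (hp : IsAtom p)
    (hpa : ¬ p ≤ a) : ∃ h, a ≤ h ∧ h ⋖ t ∧ ¬ p ≤ h := by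
  obtain ⟨c, hac, hcp⟩ := (hp.not_le_iff_disjoint.1 hpa).symm.exists_isCompl
  have hdisj : Disjoint (c ⊓ t) p := hcp.disjoint.mono_left inf_le_left
  have hsup : c ⊓ t ⊔ p = t := by
    rw [inf_comm, inf_sup_assoc_of_le c hpt, hcp.sup_eq_top, inf_top_eq]
  refine ⟨c ⊓ t, le_inf hac hat, ?_, hp.not_le_iff_disjoint.2 hdisj.symm⟩
  have hcov : c ⊓ t ⋖ c ⊓ t ⊔ p :=
    covBy_sup_of_inf_covBy_right (hdisj.eq_bot ▸ hp.bot_covBy)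
  rwa [hsup] at hcov

end Lattice

section Decompositions

variable {K W : Type*} [Field K] [AddCommGroup W] [Module K W]
  {A B P T : Submodule K W} {𝔞 : Finset (Submodule K W)}

lemma exists_isAtom_le_not_le_not_le (hA : A < T) (hB : B < T) :
    ∃ P ≤ T, IsAtom P ∧ ¬ P ≤ A ∧ ¬ P ≤ B := by
  have hcover : ¬ (T : Set W) ⊆ A ∪ B := fun h =>
    (AddSubgroupClass.subset_union.1 h).elim hA.not_ge hB.not_ge
  obtain ⟨v, hvT, hv⟩ := Set.not_subset.1 hcover
  obtain ⟨hvA, hvB⟩ := not_or.1 hv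
  have hv0 : v ≠ 0 := fun h => hvA (h ▸ A.zero_mem)
  refine ⟨K ∙ v, ?_, Submodule.isAtom_iff_finrank_eq_one.2 (finrank_span_singleton hv0), ?_, ?_⟩
  all_goals rwa [Submodule.span_singleton_le_iff_mem]

lemma IsAtomicDecomp.le_of_mem (h𝔞 : IsAtomicDecomp A 𝔞) (hP : P ∈ 𝔞) : P ≤ A :=
  h𝔞.2 ▸ Finset.le_sup (f := id) hP

lemma isMinAtomicDecomp_iff_minimal : IsMinAtomicDecomp A 𝔞 ↔ Minimal (IsAtomicDecomp A) 𝔞 :=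
  minimal_iff_forall_lt.symm

lemma IsAtomicDecomp.insert_atom [DecidableEq (Submodule K W)] (h𝔞 : IsAtomicDecomp A 𝔞)
    (hP : IsAtom P) : IsAtomicDecomp (A ⊔ P) (insert P 𝔞) := by
  refine ⟨(Finset.forall_mem_insert ..).2 ⟨Submodule.isAtom_iff_finrank_eq_one.1 hP, h𝔞.1⟩, ?_⟩
  rw [Finset.sup_insert, h𝔞.2, id, sup_comm]

lemma IsAtomicDecomp.erase_atom [DecidableEq (Submodule K W)]
    (h𝔞 : IsAtomicDecomp (A ⊔ P) 𝔞) (hP : P ∈ 𝔞) (hAP : Disjoint A P)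
    (hle : (𝔞.erase P).sup id ≤ A) : IsAtomicDecomp A (𝔞.erase P) := by
  have hsup : (𝔞.erase P).sup id ⊔ P = A ⊔ P :=
    calc (𝔞.erase P).sup id ⊔ P
        = (insert P (𝔞.erase P)).sup id := by rw [Finset.sup_insert, id, sup_comm]
      _ = A ⊔ P := by rw [Finset.insert_erase hP, h𝔞.2]
  refine ⟨fun B hB => h𝔞.1 B (Finset.mem_of_mem_erase hB), ?_⟩
  refine eq_of_le_of_inf_le_of_sup_le hle ?_ hsup.ge
  rw [hAP.eq_bot]
  exact bot_le

lemma IsMinAtomicDecomp.insert_atom [DecidableEq (Submodule K W)] (h𝔞 : IsMinAtomicDecomp A 𝔞)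
    (hP : IsAtom P) (hPA : ¬ P ≤ A) : IsMinAtomicDecomp (A ⊔ P) (insert P 𝔞) := by
  refine isMinAtomicDecomp_iff_minimal.2 ⟨h𝔞.1.insert_atom hP, fun 𝔟 h𝔟 hsub => ?_⟩
  have hP𝔟 : P ∈ 𝔟 := by
    by_contra hP𝔟
    have hsub𝔞 : 𝔟 ⊆ 𝔞 := (Finset.subset_insert_iff_of_notMem hP𝔟).1 hsub
    exact hPA (calc
      P ≤ A ⊔ P := le_sup_right
      _ = 𝔟.sup id := h𝔟.2.symm
      _ ≤ 𝔞.sup id := Finset.sup_mono hsub𝔞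
      _ = A := h𝔞.1.2)
  have herase : 𝔟.erase P ⊆ 𝔞 := Finset.subset_insert_iff.1 hsub
  have hdecomp : IsAtomicDecomp A (𝔟.erase P) :=
    h𝔟.erase_atom hP𝔟 (hP.not_le_iff_disjoint.1 hPA).symm
      ((Finset.sup_mono herase).trans_eq h𝔞.1.2)
  have h𝔞_eq : 𝔟.erase P = 𝔞 :=
    (isMinAtomicDecomp_iff_minimal.1 h𝔞).eq_of_le hdecomp herase
  rw [← h𝔞_eq, Finset.insert_erase hP𝔟]

lemma injOn_insert_isMinAtomicDecomp [DecidableEq (Submodule K W)] (hPA : ¬ P ≤ A) :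
    Set.InjOn (insert P) {𝔞 : Finset (Submodule K W) | IsMinAtomicDecomp A 𝔞} :=
  Finset.insert_erase_invOn.2.injOn.mono fun _ h𝔞 hP => hPA (h𝔞.1.le_of_mem hP)

lemma finite_setOf_isMinAtomicDecomp [Finite K] (S : Submodule K W) [FiniteDimensional K S] :
    {𝔞 : Finset (Submodule K W) | IsMinAtomicDecomp S 𝔞}.Finite := by
  have : Finite S := Module.finite_of_finite K
  have hIic : (Set.Iic S).Finite := Finite.of_equiv _ S.mapIic.toEquiv
  refine (Finset.finite_toSet hIic.toFinset.powerset).subset fun 𝔞 h𝔞 => ?_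
  exact Finset.mem_powerset.2 fun P hP => hIic.mem_toFinset.2 (h𝔞.1.le_of_mem hP)

lemma NN_le_ncard_of_insert_mem [DecidableEq (Submodule K W)]
    {s : Set (Finset (Submodule K W))} (hs : s.Finite) (hPA : ¬ P ≤ A)
    (hmem : ∀ 𝔞, IsMinAtomicDecomp A 𝔞 → insert P 𝔞 ∈ s) : NN A ≤ s.ncard :=
  Set.ncard_le_ncard_of_injOn (insert P) hmem (injOn_insert_isMinAtomicDecomp hPA) hs

section Counting

variable [Finite K] [FiniteDimensional K T]

lemma NN_le_ncard_mem_of_covBy (hA : A ⋖ T) (hPT : P ≤ T) (hP : IsAtom P) (hPA : ¬ P ≤ A) :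
    NN A ≤ {𝔞 | IsMinAtomicDecomp T 𝔞 ∧ P ∈ 𝔞}.ncard := by
  classical
  refine NN_le_ncard_of_insert_mem
    ((finite_setOf_isMinAtomicDecomp T).subset fun _ h => h.1) hPA fun 𝔞 h𝔞 => ?_
  exact ⟨sup_eq_of_covBy_of_not_le hA hPT hPA ▸ h𝔞.insert_atom hP hPA,
    Finset.mem_insert_self P 𝔞⟩

lemma NN_mono (hAT : A ≤ T) : NN A ≤ NN T := by
  induction hn : Module.finrank K T using Nat.strong_induction_on generalizing T with
  | _ n ih =>
    rcases hAT.eq_or_lt with rfl | hlt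
    · exact le_rfl
    obtain ⟨P, hPT, hP, hPA, -⟩ := exists_isAtom_le_not_le_not_le hlt hlt
    obtain ⟨H, hAH, hHT, hPH⟩ := exists_le_covBy_not_le hAT hPT hP hPA
    have : FiniteDimensional K H := Submodule.finiteDimensional_of_le hHT.le
    calc NN A ≤ NN H := ih _ (hn ▸ Submodule.finrank_lt_finrank_of_lt hHT.lt) hAH rfl
      _ ≤ {𝔞 | IsMinAtomicDecomp T 𝔞 ∧ P ∈ 𝔞}.ncard := NN_le_ncard_mem_of_covBy hHT hPT hP hPH
      _ ≤ NN T := Set.ncard_le_ncard (fun _ h => h.1) (finite_setOf_isMinAtomicDecomp T)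

lemma NN_le_ncard_mem (hAT : A ≤ T) (hPT : P ≤ T) (hP : IsAtom P) (hPA : ¬ P ≤ A) :
    NN A ≤ {𝔞 | IsMinAtomicDecomp T 𝔞 ∧ P ∈ 𝔞}.ncard := by
  obtain ⟨H, hAH, hHT, hPH⟩ := exists_le_covBy_not_le hAT hPT hP hPA
  have : FiniteDimensional K H := Submodule.finiteDimensional_of_le hHT.le
  exact (NN_mono hAH).trans (NN_le_ncard_mem_of_covBy hHT hPT hP hPH)

lemma NN_le_ncard_notMem (hAT : A ≤ T) (hA : A ≠ ⊥) (hPT : P ≤ T) (hP : IsAtom P)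
    (hPA : ¬ P ≤ A) : NN A ≤ {𝔞 | IsMinAtomicDecomp T 𝔞 ∧ P ∉ 𝔞}.ncard := by
  classical
  obtain ⟨H, hAH, hHT, hPH⟩ := exists_le_covBy_not_le hAT hPT hP hPA
  have : FiniteDimensional K H := Submodule.finiteDimensional_of_le hHT.le
  have hPT_lt : P < T := by
    refine hPT.lt_of_ne ?_
    rintro rfl
    exact ne_bot_of_le_ne_bot hA hAH (hP.2 H hHT.lt)
  obtain ⟨Q, hQT, hQ, hQH, hQP⟩ := exists_isAtom_le_not_le_not_le hHT.lt hPT_lt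
  refine (NN_mono hAH).trans (NN_le_ncard_of_insert_mem
    ((finite_setOf_isMinAtomicDecomp T).subset fun _ h => h.1) hQH fun 𝔞 h𝔞 => ⟨?_, ?_⟩)
  · exact sup_eq_of_covBy_of_not_le hHT hQT hQH ▸ h𝔞.insert_atom hQ hQH
  · rw [Finset.mem_insert, not_or]
    exact ⟨fun h => hQP h.ge, fun h => hPH (h𝔞.1.le_of_mem h)⟩

lemma NN_add_NN_le_of_lt (hA : A < T) (hB : B < T) (hB0 : B ≠ ⊥) : NN A + NN B ≤ NN T := by
  obtain ⟨P, hPT, hP, hPA, hPB⟩ := exists_isAtom_le_not_le_not_le hA hB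
  calc NN A + NN B
      ≤ {𝔞 | IsMinAtomicDecomp T 𝔞 ∧ P ∈ 𝔞}.ncard + {𝔞 | IsMinAtomicDecomp T 𝔞 ∧ P ∉ 𝔞}.ncard :=
        add_le_add (NN_le_ncard_mem hA.le hPT hP hPA) (NN_le_ncard_notMem hB.le hB0 hPT hP hPB)
    _ = NN T := Set.ncard_inter_add_ncard_sdiff_eq_ncard {𝔞 | IsMinAtomicDecomp T 𝔞} {𝔞 | P ∈ 𝔞}
        (finite_setOf_isMinAtomicDecomp T)

lemma NN_add_NN_le_NN_inf_add_NN (hA : A ≤ T) (hB : B ≤ T) :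
    NN A + NN B ≤ NN (A ⊓ B) + NN T := by
  rcases hA.eq_or_lt with rfl | hA_lt
  · rw [inf_eq_right.2 hB, add_comm]
  rcases hB.eq_or_lt with rfl | hB_lt
  · rw [inf_eq_left.2 hA]
  rcases eq_or_ne B ⊥ with rfl | hB0
  · rw [inf_bot_eq, add_comm]
    exact Nat.add_le_add_left (NN_mono hA) _
  · exact (NN_add_NN_le_of_lt hA_lt hB_lt hB0).trans (Nat.le_add_left _ _)

end Counting

theorem NN_intersection_inequality_general [Finite K] (S T U : Submodule K W)
    [FiniteDimensional K T] [FiniteDimensional K ↥(S ⊓ U)] :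
    NN (S ⊓ T) + NN (T ⊓ U) ≤ NN (S ⊓ U) + NN T :=
  calc NN (S ⊓ T) + NN (T ⊓ U)
      ≤ NN (S ⊓ T ⊓ (T ⊓ U)) + NN T := NN_add_NN_le_NN_inf_add_NN inf_le_right inf_le_left
    _ ≤ NN (S ⊓ U) + NN T :=
        Nat.add_le_add_right (NN_mono (inf_le_inf inf_le_left inf_le_right)) _

end Decompositions

/-- For all subspaces `S, T, U ⊆ V`,
`𝔑(S ∩ T) + 𝔑(T ∩ U) ≤ 𝔑(S ∩ U) + 𝔑(T)`. -/
theorem NN_intersection_inequality (S T U : Submodule F V) :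
    NN (S ⊓ T) + NN (T ⊓ U) ≤ NN (S ⊓ U) + NN T :=
  NN_intersection_inequality_general S T U
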